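/- (Contact/measure estimate) There exist constants M > 1 and θ ∈ (0,1) depending only on n, λ, Λ such that: if a_{ij} : B₁ → ℝ are uniformly elliptic measurable coefficients and v ∈ C²(B₁) is nonnegative, satisfies Σ_{i,j} a_{ij}(x) ∂_{ij} v(x) ≤ 0 for all x ∈ B₁, and v(0) ≤ 1, then for every x₀ ∈ B_{1/4}, |{x ∈ B_{1/8}(x₀) : v(x) < M}| ≥ θ |B_{1/8}(x₀)|. -/

import Mathlib

/-!
If `v` is a nonnegative supersolution, then `φ = b log (v + 1)` is one with a gain quadratic in the
gradient: `tr (A D²φ) ≤ -(λ / b) |∇φ|²`. For each `y` near `x₀` slide a paraboloid of opening one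
centred at `y` until it touches the graph of `φ` from below, at `x` say. Then `y = x + ∇φ(x)` and
`1 + D²φ(x) ≥ 0`. Comparison with the origin, where `φ ≤ b`, bounds `φ(x)`, hence `v(x)`. Tracing
`1 + D²φ(x)` against `A(x)` gives `λ tr (1 + D²φ(x)) + (λ / b) |∇φ(x)|² ≤ nΛ`. The first term bounds
the Jacobian of `x ↦ x + ∇φ(x)` by `(Λ / λ)ⁿ`, so the area formula shows that the contact points
fill a fixed proportion of a ball around `x₀`. The second one forces `|x - y| = |∇φ(x)|` to be small
if `b` is, so that the contact points stay close to `x₀`.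
-/

open MeasureTheory Metric Set Filter
open scoped ENNReal NNReal Topology

noncomputable section

/-- Euclidean space `ℝⁿ`. -/
abbrev En (n : ℕ) := EuclideanSpace ℝ (Fin n)

/-- The second partial derivative `∂_{ij} v (x)`. -/
def pd2 {n : ℕ} (v : En n → ℝ) (i j : Fin n) (x : En n) : ℝ :=
  fderiv ℝ (fun y => fderiv ℝ v y (EuclideanSpace.single i 1)) x (EuclideanSpace.single j 1)

/-- Measurable, uniformly elliptic coefficients on `Ω`:
`λ|ξ|² ≤ Σ aᵢⱼ(x) ξᵢ ξⱼ ≤ Λ|ξ|²` for every `x ∈ Ω` and all `ξ`. -/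
def UnifEllipticOn {n : ℕ} (Ω : Set (En n)) (lam Lam : ℝ)
    (a : Fin n → Fin n → En n → ℝ) : Prop :=
  (∀ i j, Measurable (a i j)) ∧
    ∀ x ∈ Ω, ∀ ξ : En n,
      lam * ∑ i, ξ i ^ 2 ≤ ∑ i, ∑ j, a i j x * ξ i * ξ j ∧
      ∑ i, ∑ j, a i j x * ξ i * ξ j ≤ Lam * ∑ i, ξ i ^ 2

section SecondOrder

open scoped Gradient RealInnerProductSpace

variable {E : Type*} [NormedAddCommGroup E] [InnerProductSpace ℝ E] [CompleteSpace E]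
  {f u φ : E → ℝ} {x y : E}

/-- The Hessian `D²f(x)`, encoded as an operator rather than a bilinear form so that its
positivity, trace and determinant are those of a linear map. -/
def hessian (f : E → ℝ) (x : E) : E →L[ℝ] E := fderiv ℝ (∇ f) x

lemma hessian_add_const (f : E → ℝ) (c : ℝ) : hessian (fun z => f z + c) = hessian f := by
  have h : ∇ (fun z => f z + c) = ∇ f := by
    ext1 z
    simp [gradient]
  ext1 x
  rw [hessian, hessian, h]

lemma hasFDerivAt_gradient (hf : ContDiffAt ℝ 2 f x) : HasFDerivAt (∇ f) (hessian f x) x :=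
  ((InnerProductSpace.toDual ℝ E).symm.differentiable.differentiableAt.comp x
    ((hf.fderiv_right (m := 1) (by norm_num)).differentiableAt one_ne_zero)).hasFDerivAt

lemma inner_hessian (hf : ContDiffAt ℝ 2 f x) (ξ η : E) :
    ⟪hessian f x ξ, η⟫ = fderiv ℝ (fun z => fderiv ℝ f z η) x ξ := by
  have h := (hasFDerivAt_gradient hf).inner ℝ (hasFDerivAt_const η x)
  simp only [inner_gradient_left] at h
  simp [h.fderiv]

lemma eventually_hasGradientAt (hf : ContDiffAt ℝ 2 f x) :
    ∀ᶠ z in 𝓝 x, HasGradientAt f (∇ f z) z :=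
  (hf.eventually (by simp)).mono fun _ hz => (hz.differentiableAt two_ne_zero).hasGradientAt

lemma hessian_eq_of_hasGradientAt {g : E → E} {H : E →L[ℝ] E}
    (hf : ∀ᶠ z in 𝓝 x, HasGradientAt f (g z) z) (hg : HasFDerivAt g H x) : hessian f x = H :=
  (hg.congr_of_eventuallyEq (hf.mono fun _ hz => hz.gradient)).fderiv

lemma isSymmetric_hessian (hf : ContDiffAt ℝ 2 f x) : (hessian f x).IsSymmetric := fun ξ η => by
  have hf' : DifferentiableAt ℝ (fderiv ℝ f) x :=
    (hf.fderiv_right (m := 1) (by norm_num)).differentiableAt one_ne_zero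
  rw [ContinuousLinearMap.coe_coe, inner_hessian hf, real_inner_comm, inner_hessian hf]
  simpa [fderiv_clm_apply hf'] using (hf.isSymmSndFDerivAt (by simp)).eq ξ η

lemma deriv_deriv_nonneg_of_isLocalMin {g : ℝ → ℝ} {t : ℝ} (hg : ContinuousAt g t)
    (hmin : IsLocalMin g t) : 0 ≤ deriv (deriv g) t := by
  by_contra! hneg
  have hmax : IsLocalMax g t := isLocalMax_of_deriv_deriv_neg hneg hmin.deriv_eq_zero hg
  have hconst : g =ᶠ[𝓝 t] fun _ => g t := by
    filter_upwards [hmin, hmax] with z hz hz' using le_antisymm hz' hz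
  have hzero : deriv (deriv g) t = 0 := by
    rw [hconst.deriv.deriv_eq]
    simp
  exact hneg.ne hzero

lemma deriv_deriv_comp_line (hf : ContDiffAt ℝ 2 f x) (ξ : E) :
    deriv (deriv fun t : ℝ => f (x + t • ξ)) 0 = ⟪hessian f x ξ, ξ⟫ := by
  have hline (t : ℝ) : HasDerivAt (fun t : ℝ => x + t • ξ) ξ t := by
    simpa using ((hasDerivAt_id t).smul_const ξ).const_add x
  have hx : Tendsto (fun t : ℝ => x + t • ξ) (𝓝 0) (𝓝 x) := by
    simpa using (hline 0).continuousAt.tendsto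
  have hfirst : deriv (fun t : ℝ => f (x + t • ξ)) =ᶠ[𝓝 0] fun t => ⟪∇ f (x + t • ξ), ξ⟫ :=
    (hx.eventually (eventually_hasGradientAt hf)).mono fun t ht => by
      simpa [Function.comp_def] using (ht.hasFDerivAt.comp_hasDerivAt t (hline t)).deriv
  have hgrad : HasFDerivAt (∇ f) (hessian f x) (x + (0 : ℝ) • ξ) := by
    simpa using hasFDerivAt_gradient hf
  rw [hfirst.deriv_eq]
  simpa using ((hgrad.comp_hasDerivAt 0 (hline 0)).inner ℝ (hasDerivAt_const 0 ξ)).deriv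

lemma isPositive_hessian_of_isLocalMin (hf : ContDiffAt ℝ 2 f x) (hmin : IsLocalMin f x) :
    (hessian f x).IsPositive := by
  refine (ContinuousLinearMap.isPositive_iff _).2 ⟨isSymmetric_hessian hf, fun ξ => ?_⟩
  have hline : ContinuousAt (fun t : ℝ => x + t • ξ) 0 := by fun_prop
  rw [← deriv_deriv_comp_line hf]
  refine deriv_deriv_nonneg_of_isLocalMin ?_ ?_
  · exact ContinuousAt.comp (by simpa using hf.continuousAt) hline
  · simpa [IsLocalMin, IsMinFilter] using hline.eventually (p := fun z => f x ≤ f z)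
      (by simpa [IsLocalMin, IsMinFilter] using hmin)

lemma hasGradientAt_comp {g : ℝ → ℝ} {g' : ℝ} {p : E} (hg : HasDerivAt g g' (u x))
    (hu : HasGradientAt u p x) : HasGradientAt (fun z => g (u z)) (g' • p) x := by
  rw [hasGradientAt_iff_hasFDerivAt, map_smul]
  exact hg.comp_hasFDerivAt x hu.hasFDerivAt

lemma hessian_comp {g g' : ℝ → ℝ} {g'' : ℝ} (hu : ContDiffAt ℝ 2 u x)
    (hg : ∀ᶠ t in 𝓝 (u x), HasDerivAt g (g' t) t) (hg' : HasDerivAt g' g'' (u x)) :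
    hessian (fun z => g (u z)) x =
      g' (u x) • hessian u x + g'' • InnerProductSpace.rankOne ℝ (∇ u x) (∇ u x) := by
  have hgrad : ∀ᶠ z in 𝓝 x, HasGradientAt (fun z => g (u z)) (g' (u z) • ∇ u z) z := by
    filter_upwards [hu.continuousAt.eventually hg, eventually_hasGradientAt hu] with z hgz huz
      using hasGradientAt_comp hgz huz
  have hu' := (hu.differentiableAt two_ne_zero).hasGradientAt.hasFDerivAt
  rw [hessian_eq_of_hasGradientAt hgrad ((hg'.comp_hasFDerivAt x hu').smul
    (hasFDerivAt_gradient hu))]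
  ext ξ
  simp [smul_smul, inner_gradient_left]

lemma hasGradientAt_half_sq_dist_add {p : E} (y : E) (hφ : HasGradientAt φ p x) :
    HasGradientAt (fun z => dist z y ^ 2 / 2 + φ z) (x - y + p) x := by
  have hsq : HasFDerivAt (fun z => dist z y ^ 2 / 2) (innerSL ℝ (x - y)) x := by
    simp only [dist_eq_norm, div_eq_inv_mul]
    refine (((hasFDerivAt_id x).sub_const y).norm_sq.const_mul 2⁻¹).congr_fderiv ?_
    ext ξ
    simp
  rw [hasGradientAt_iff_hasFDerivAt, map_add]
  exact hsq.add hφ.hasFDerivAt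

/-- The centre of the paraboloid `c - ‖· - y‖² / 2` which touches `φ` at `x` to first order. -/
def contactMap (φ : E → ℝ) (x : E) : E := x + ∇ φ x

lemma hasFDerivAt_contactMap (hφ : ContDiffAt ℝ 2 φ x) :
    HasFDerivAt (contactMap φ) (.id ℝ E + hessian φ x) x :=
  (hasFDerivAt_id x).add (hasFDerivAt_gradient hφ)

lemma contactMap_eq_of_isLocalMin (hφ : DifferentiableAt ℝ φ x)
    (hmin : IsLocalMin (fun z => dist z y ^ 2 / 2 + φ z) x) : contactMap φ x = y := by
  have h := hmin.hasFDerivAt_eq_zero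
    (hasGradientAt_half_sq_dist_add y hφ.hasGradientAt).hasFDerivAt
  rw [map_eq_zero_iff _ (InnerProductSpace.toDual ℝ E).injective, sub_add_eq_add_sub] at h
  exact sub_eq_zero.1 h

lemma isPositive_id_add_hessian_of_isLocalMin (hφ : ContDiffAt ℝ 2 φ x)
    (hmin : IsLocalMin (fun z => dist z y ^ 2 / 2 + φ z) x) :
    (.id ℝ E + hessian φ x : E →L[ℝ] E).IsPositive := by
  have hgrad : ∀ᶠ z in 𝓝 x,
      HasGradientAt (fun z => dist z y ^ 2 / 2 + φ z) (z - y + ∇ φ z) z :=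
    (eventually_hasGradientAt hφ).mono fun z hz => hasGradientAt_half_sq_dist_add y hz
  have hdist : ContDiffAt ℝ 2 (fun z => dist z y ^ 2 / 2) x := by
    simp only [dist_eq_norm]
    exact ((contDiffAt_id.sub contDiffAt_const).norm_sq ℝ).div_const 2
  have hhess : hessian (fun z => dist z y ^ 2 / 2 + φ z) x = .id ℝ E + hessian φ x :=
    hessian_eq_of_hasGradientAt hgrad
      (((hasFDerivAt_id x).sub_const y).add (hasFDerivAt_gradient hφ))
  rw [← hhess]
  exact isPositive_hessian_of_isLocalMin (hdist.add hφ) hmin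

end SecondOrder

section Operators

open Module
open scoped RealInnerProductSpace

variable {E : Type*} [NormedAddCommGroup E] [InnerProductSpace ℝ E] [FiniteDimensional ℝ E]
  {A N : E →L[ℝ] E}

lemma trace_comp_rankOne_self (A : E →L[ℝ] E) (p : E) :
    LinearMap.trace ℝ E (A ∘L InnerProductSpace.rankOne ℝ p p) = ⟪p, A p⟫ := by
  rw [InnerProductSpace.comp_rankOne, InnerProductSpace.trace_rankOne]

lemma mul_trace_le_trace_comp {c : ℝ} (hA : ∀ ξ, c * ‖ξ‖ ^ 2 ≤ ⟪ξ, A ξ⟫)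
    (hN : N.IsPositive) :
    c * LinearMap.trace ℝ E N ≤ LinearMap.trace ℝ E (A ∘L N) := by
  obtain ⟨m, p, rfl⟩ := ContinuousLinearMap.isPositive_iff_eq_sum_rankOne.1 hN
  simp only [ContinuousLinearMap.comp_finsetSum, ContinuousLinearMap.toLinearMap_sum, map_sum,
    trace_comp_rankOne_self, InnerProductSpace.trace_rankOne, real_inner_self_eq_norm_sq,
    Finset.mul_sum]
  exact Finset.sum_le_sum fun i _ => hA (p i)

lemma trace_le_finrank_mul {C : ℝ} (hA : ∀ ξ, ⟪ξ, A ξ⟫ ≤ C * ‖ξ‖ ^ 2) :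
    LinearMap.trace ℝ E A ≤ finrank ℝ E * C := by
  have b := stdOrthonormalBasis ℝ E
  rw [LinearMap.trace_eq_sum_inner _ b]
  calc ∑ i, ⟪b i, A (b i)⟫ ≤ ∑ _i : Fin (finrank ℝ E), C :=
        Finset.sum_le_sum fun i _ => by simpa using hA (b i)
    _ = finrank ℝ E * C := by simp

lemma prod_le_sum_div_card_pow {ι : Type*} [Fintype ι] {z : ι → ℝ} (hz : ∀ i, 0 ≤ z i) :
    ∏ i, z i ≤ ((∑ i, z i) / Fintype.card ι) ^ Fintype.card ι := by
  rcases isEmpty_or_nonempty ι with _ | _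
  · simp
  have hamgm : (∏ i, z i) ^ (Fintype.card ι : ℝ)⁻¹ ≤ (∑ i, z i) / Fintype.card ι := by
    simpa using Real.geom_mean_le_arith_mean Finset.univ 1 z (by simp)
      (by simp [Fintype.card_pos (α := ι)]) fun i _ => hz i
  have hprod : 0 ≤ ∏ i, z i := Finset.prod_nonneg fun i _ => hz i
  rw [← Real.rpow_inv_natCast_pow hprod (Fintype.card_ne_zero (α := ι))]
  gcongr

lemma abs_det_le_trace_div_finrank_pow (hN : N.IsPositive) :
    |N.det| ≤ (LinearMap.trace ℝ E N / finrank ℝ E) ^ finrank ℝ E := by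
  have hsymm := hN.isSymmetric
  have hnonneg := hN.toLinearMap.nonneg_eigenvalues rfl
  have hdet : N.det = ∏ i, hsymm.eigenvalues rfl i := hsymm.det_eq_prod_eigenvalues rfl
  rw [hdet, abs_of_nonneg (Finset.prod_nonneg fun i _ => hnonneg i),
    hsymm.trace_eq_sum_eigenvalues rfl]
  simpa using prod_le_sum_div_card_pow hnonneg

end Operators

section Area

lemma addHaar_image_le_of_abs_det_fderiv_le {E : Type*} [NormedAddCommGroup E]
    [NormedSpace ℝ E] [FiniteDimensional ℝ E] [MeasurableSpace E] [BorelSpace E]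
    (μ : Measure E) [μ.IsAddHaarMeasure] {f : E → E} {s : Set E} (hs : MeasurableSet s)
    (hf : ∀ x ∈ s, DifferentiableAt ℝ f x) (C : ℝ) :
    μ (f '' {x ∈ s | |(fderiv ℝ f x).det| ≤ C}) ≤ ENNReal.ofReal C * μ s := by
  have hmeas : MeasurableSet {x ∈ s | |(fderiv ℝ f x).det| ≤ C} :=
    hs.inter (measurableSet_le
      (ContinuousLinearMap.continuous_det.measurable.comp (measurable_fderiv ℝ f)).abs
      measurable_const)
  calc μ (f '' {x ∈ s | |(fderiv ℝ f x).det| ≤ C})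
      ≤ ∫⁻ x in {x ∈ s | |(fderiv ℝ f x).det| ≤ C}, ENNReal.ofReal |(fderiv ℝ f x).det| ∂μ :=
        addHaar_image_le_lintegral_abs_det_fderiv μ hmeas fun x hx =>
          (hf x hx.1).hasFDerivAt.hasFDerivWithinAt
    _ ≤ ∫⁻ _ in {x ∈ s | |(fderiv ℝ f x).det| ≤ C}, ENNReal.ofReal C ∂μ :=
        setLIntegral_mono' hmeas fun x hx => ENNReal.ofReal_le_ofReal hx.2
    _ ≤ ENNReal.ofReal C * μ s := by
        rw [setLIntegral_const]
        gcongr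
        exact sep_subset _ _

end Area

section Scales

open Module

lemma exists_pos_lt_and_mul_lt (C : ℝ) {ε η : ℝ} (hε : 0 < ε) (hη : 0 < η) :
    ∃ b > 0, b < ε ∧ b * C < η := by
  have hmul : ∀ᶠ b in 𝓝 (0 : ℝ), b * C < η :=
    ((continuous_mul_const C).tendsto' 0 0 (zero_mul C)).eventually_lt_const hη
  have hsmall := (eventually_lt_nhds hε).and hmul
  exact ((hsmall.filter_mono nhdsWithin_le_nhds).and
    (eventually_mem_nhdsWithin (s := Ioi (0 : ℝ)))).exists.imp fun _ h => h.symm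

lemma ofReal_inv_mul_addHaar_ball_le {E : Type*} [NormedAddCommGroup E] [NormedSpace ℝ E]
    [FiniteDimensional ℝ E] [MeasurableSpace E] [BorelSpace E] (μ : Measure E)
    [μ.IsAddHaarMeasure] {x : E} {r s K : ℝ} {m : ℝ≥0∞} (hr : 0 < r) (hs : 0 < s) (hK : 0 < K)
    (h : μ (ball x s) ≤ ENNReal.ofReal K * m) :
    ENNReal.ofReal ((r / s) ^ finrank ℝ E * K)⁻¹ * μ (ball x r) ≤ m := by
  rw [ENNReal.ofReal_inv_of_pos (by positivity),
    ENNReal.inv_mul_le_iff (by positivity) ENNReal.ofReal_ne_top]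
  calc μ (ball x r) = ENNReal.ofReal ((r / s) ^ finrank ℝ E) * μ (ball x s) := by
        rw [Measure.addHaar_ball_center μ x s,
          ← Measure.addHaar_ball_mul_of_pos μ x (by positivity), div_mul_cancel₀ r hs.ne']
    _ ≤ ENNReal.ofReal ((r / s) ^ finrank ℝ E * K) * m := by
        rw [ENNReal.ofReal_mul (by positivity), mul_assoc]
        gcongr

lemma closedBall_half_subset_and_sq_dist_lt {E : Type*} [SeminormedAddCommGroup E] {x₀ y : E}
    {b ρ : ℝ} (hρ : ρ < 1 / 2) (hx₀ : x₀ ∈ ball 0 ρ) (hy : y ∈ ball x₀ (1 / 4 - ρ / 2))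
    (hb : b < (1 / 4 - ρ / 2) / 4) :
    closedBall y (1 / 2) ⊆ ball 0 1 ∧ dist 0 y ^ 2 / 2 + b < (1 / 2) ^ 2 / 2 := by
  have hy0 : dist y 0 < 1 / 4 + ρ / 2 := by
    linarith [dist_triangle y x₀ 0, mem_ball.1 hx₀, mem_ball.1 hy]
  refine ⟨closedBall_subset_ball' (by linarith), ?_⟩
  rw [dist_comm]
  nlinarith [dist_nonneg (x := y) (y := (0 : E))]

end Scales

section Contact

open scoped Gradient

lemma exists_isLocalMin_half_sq_dist_add {X : Type*} [PseudoMetricSpace X] [ProperSpace X]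
    {φ : X → ℝ} {c y : X} {s : ℝ} (hs : 0 ≤ s) (hφ : ContinuousOn φ (closedBall y s))
    (hnonneg : ∀ x ∈ closedBall y s, 0 ≤ φ x) (hc : 0 ≤ φ c)
    (hlt : dist c y ^ 2 / 2 + φ c < s ^ 2 / 2) :
    ∃ x ∈ ball y s, IsLocalMin (fun z => dist z y ^ 2 / 2 + φ z) x ∧ φ x < s ^ 2 / 2 := by
  have hcs : c ∈ closedBall y s := mem_closedBall.2 (abs_le_of_sq_le_sq' (by linarith) hs).2
  obtain ⟨x, hx, hmin⟩ := (isCompact_closedBall y s).exists_isMinOn ⟨c, hcs⟩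
    (f := fun z => dist z y ^ 2 / 2 + φ z) (by fun_prop)
  have hval : dist x y ^ 2 / 2 + φ x < s ^ 2 / 2 := (hmin hcs).trans_lt hlt
  have hball : x ∈ ball y s :=
    mem_ball.2 (abs_lt_of_sq_lt_sq' (by linarith [hnonneg x hx]) hs).2
  exact ⟨x, hball, hmin.isLocalMin (closedBall_mem_nhds_of_mem hball),
    by linarith [sq_nonneg (dist x y)]⟩

variable {E : Type*} [NormedAddCommGroup E] [InnerProductSpace ℝ E] [FiniteDimensional ℝ E]

lemma exists_contactMap_eq {U : Set E} {φ : E → ℝ} {c y : E} {s : ℝ} (hU : IsOpen U)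
    (hφ : ContDiffOn ℝ 2 φ U) (hnonneg : ∀ x ∈ U, 0 ≤ φ x) (hs : 0 ≤ s) (hc : c ∈ U)
    (hball : closedBall y s ⊆ U) (hlt : dist c y ^ 2 / 2 + φ c < s ^ 2 / 2) :
    ∃ x ∈ U, contactMap φ x = y ∧ (.id ℝ E + hessian φ x : E →L[ℝ] E).IsPositive ∧
      φ x < s ^ 2 / 2 := by
  obtain ⟨x, hx, hmin, hval⟩ := exists_isLocalMin_half_sq_dist_add hs
    (hφ.continuousOn.mono hball) (fun x hx => hnonneg x (hball hx)) (hnonneg c hc) hlt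
  have hxU : x ∈ U := hball (ball_subset_closedBall hx)
  have hφx : ContDiffAt ℝ 2 φ x := hφ.contDiffAt (hU.mem_nhds hxU)
  exact ⟨x, hxU, contactMap_eq_of_isLocalMin (hφx.differentiableAt two_ne_zero) hmin,
    isPositive_id_add_hessian_of_isLocalMin hφx hmin, hval⟩

lemma addHaar_ball_le_of_contact [MeasurableSpace E] [BorelSpace E] (μ : Measure E)
    [μ.IsAddHaarMeasure] {U : Set E} {φ : E → ℝ} {c x₀ : E} {r s δ K : ℝ} (hU : IsOpen U)
    (hφ : ContDiffOn ℝ 2 φ U) (hnonneg : ∀ x ∈ U, 0 ≤ φ x) (hs : 0 ≤ s) (hc : c ∈ U)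
    (hball : ∀ y ∈ ball x₀ r, closedBall y s ⊆ U ∧ dist c y ^ 2 / 2 + φ c < s ^ 2 / 2)
    (hcontact : ∀ x ∈ U, (.id ℝ E + hessian φ x : E →L[ℝ] E).IsPositive →
      |(.id ℝ E + hessian φ x : E →L[ℝ] E).det| ≤ K ∧ ‖∇ φ x‖ ≤ δ) :
    μ (ball x₀ r) ≤ ENNReal.ofReal K * μ {x ∈ U ∩ ball x₀ (r + δ) | φ x < s ^ 2 / 2} := by
  have hopen : IsOpen {x ∈ U ∩ ball x₀ (r + δ) | φ x < s ^ 2 / 2} :=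
    (hφ.continuousOn.mono inter_subset_left).isOpen_inter_preimage (hU.inter isOpen_ball)
      isOpen_Iio
  have hderiv (x : E) (hx : x ∈ U) := hasFDerivAt_contactMap (hφ.contDiffAt (hU.mem_nhds hx))
  refine (measure_mono fun y hy => ?_).trans (addHaar_image_le_of_abs_det_fderiv_le μ
    hopen.measurableSet (fun x hx => (hderiv x hx.1.1).differentiableAt) K)
  obtain ⟨x, hx, rfl, hpos, hval⟩ :=
    exists_contactMap_eq hU hφ hnonneg hs hc (hball y hy).1 (hball y hy).2
  obtain ⟨hdet, hgrad⟩ := hcontact x hx hpos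
  have hxball : x ∈ ball x₀ (r + δ) := by
    rw [mem_ball, add_comm r]
    refine (dist_triangle x (contactMap φ x) x₀).trans_lt (add_lt_add_of_le_of_lt ?_ hy)
    simpa [contactMap] using hgrad
  exact ⟨x, ⟨⟨⟨hx, hxball⟩, hval⟩, by rwa [(hderiv x hx).fderiv]⟩, rfl⟩

end Contact

section Supersolution

open Module
open scoped Gradient RealInnerProductSpace

variable {E : Type*} [NormedAddCommGroup E] [InnerProductSpace ℝ E] [FiniteDimensional ℝ E]
  {A : E →L[ℝ] E} {u φ : E → ℝ} {x : E} {lam Lam b : ℝ}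

lemma trace_comp_hessian_log_le (hu : ContDiffAt ℝ 2 u x) (hpos : 0 < u x) (hb : 0 < b)
    (hA : ∀ ξ, lam * ‖ξ‖ ^ 2 ≤ ⟪ξ, A ξ⟫) (hsup : LinearMap.trace ℝ E (A ∘L hessian u x) ≤ 0) :
    LinearMap.trace ℝ E (A ∘L hessian (fun z => b * Real.log (u z)) x) ≤
      -(lam / b * ‖∇ (fun z => b * Real.log (u z)) x‖ ^ 2) := by
  have hlog : ∀ᶠ t in 𝓝 (u x), HasDerivAt (fun t => b * Real.log t) (b * t⁻¹) t :=
    (eventually_ne_nhds hpos.ne').mono fun t ht => (Real.hasDerivAt_log ht).const_mul b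
  have hinv : HasDerivAt (fun t => b * t⁻¹) (b * -(u x ^ 2)⁻¹) (u x) :=
    (hasDerivAt_inv hpos.ne').const_mul b
  have hgrad : ∇ (fun z => b * Real.log (u z)) x = (b * (u x)⁻¹) • ∇ u x :=
    (hasGradientAt_comp hlog.self_of_nhds
      (hu.differentiableAt two_ne_zero).hasGradientAt).gradient
  have htrace : LinearMap.trace ℝ E (A ∘L hessian (fun z => b * Real.log (u z)) x) =
      b * (u x)⁻¹ * LinearMap.trace ℝ E (A ∘L hessian u x) -
        b * (u x ^ 2)⁻¹ * ⟪∇ u x, A (∇ u x)⟫ := by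
    rw [hessian_comp hu hlog hinv, ← trace_comp_rankOne_self]
    simp [sub_eq_add_neg]
  calc LinearMap.trace ℝ E (A ∘L hessian (fun z => b * Real.log (u z)) x)
      ≤ 0 - b * (u x ^ 2)⁻¹ * (lam * ‖∇ u x‖ ^ 2) := by
        rw [htrace]
        gcongr
        · exact mul_nonpos_of_nonneg_of_nonpos (by positivity) hsup
        · exact hA _
    _ = -(lam / b * ‖∇ (fun z => b * Real.log (u z)) x‖ ^ 2) := by
        rw [hgrad, norm_smul, mul_pow, Real.norm_eq_abs, sq_abs]
        field_simp
        ring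

lemma trace_id_add_hessian_add_le {m τ : ℝ} (hA : ∀ ξ, lam * ‖ξ‖ ^ 2 ≤ ⟪ξ, A ξ⟫)
    (htr : LinearMap.trace ℝ E A ≤ τ)
    (hsup : LinearMap.trace ℝ E (A ∘L hessian φ x) ≤ -(m * ‖∇ φ x‖ ^ 2))
    (hpos : (.id ℝ E + hessian φ x : E →L[ℝ] E).IsPositive) :
    lam * LinearMap.trace ℝ E (.id ℝ E + hessian φ x : E →L[ℝ] E) + m * ‖∇ φ x‖ ^ 2 ≤ τ := by
  have hsplit : LinearMap.trace ℝ E (A ∘L (.id ℝ E + hessian φ x)) =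
      LinearMap.trace ℝ E A + LinearMap.trace ℝ E (A ∘L hessian φ x) := by
    rw [ContinuousLinearMap.comp_add, ContinuousLinearMap.comp_id,
      ContinuousLinearMap.toLinearMap_add, map_add]
  linarith [mul_trace_le_trace_comp hA hpos]

lemma abs_det_le_and_sq_norm_gradient_le (hlam : 0 < lam) (hLam : lam ≤ Lam) (hb : 0 < b)
    (hA : ∀ ξ, lam * ‖ξ‖ ^ 2 ≤ ⟪ξ, A ξ⟫ ∧ ⟪ξ, A ξ⟫ ≤ Lam * ‖ξ‖ ^ 2)
    (hsup : LinearMap.trace ℝ E (A ∘L hessian φ x) ≤ -(lam / b * ‖∇ φ x‖ ^ 2))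
    (hpos : (.id ℝ E + hessian φ x : E →L[ℝ] E).IsPositive) :
    |(.id ℝ E + hessian φ x : E →L[ℝ] E).det| ≤ (Lam / lam) ^ finrank ℝ E ∧
      ‖∇ φ x‖ ^ 2 ≤ b * (finrank ℝ E * Lam / lam) := by
  have hsum := trace_id_add_hessian_add_le (fun ξ => (hA ξ).1)
    (trace_le_finrank_mul fun ξ => (hA ξ).2) hsup hpos
  set T := LinearMap.trace ℝ E (.id ℝ E + hessian φ x : E →L[ℝ] E)
  have hT : 0 ≤ T := hpos.toLinearMap.trace_nonneg
  have hT_le : T ≤ Lam / lam * finrank ℝ E := by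
    rw [div_mul_eq_mul_div, le_div_iff₀ hlam]
    linarith [show 0 ≤ lam / b * ‖∇ φ x‖ ^ 2 by positivity]
  constructor
  · refine (abs_det_le_trace_div_finrank_pow hpos).trans ?_
    refine pow_le_pow_left₀ (div_nonneg hT (Nat.cast_nonneg _)) ?_ _
    exact div_le_of_le_mul₀ (by positivity) (div_nonneg (hlam.le.trans hLam) hlam.le) hT_le
  · have hgrad : lam / b * ‖∇ φ x‖ ^ 2 ≤ finrank ℝ E * Lam := by
      linarith [mul_nonneg hlam.le hT]
    rwa [div_mul_eq_mul_div, div_le_iff₀ hb, mul_comm, ← le_div_iff₀ hlam,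
      mul_div_right_comm, mul_comm] at hgrad

lemma addHaar_ball_le_of_supersolution [MeasurableSpace E] [BorelSpace E] (μ : Measure E)
    [μ.IsAddHaarMeasure] {U : Set E} {A : E → E →L[ℝ] E} {v : E → ℝ} {c x₀ : E} {r s δ : ℝ}
    (hU : IsOpen U) (hlam : 0 < lam) (hLam : lam ≤ Lam)
    (hA : ∀ x ∈ U, ∀ ξ, lam * ‖ξ‖ ^ 2 ≤ ⟪ξ, A x ξ⟫ ∧ ⟪ξ, A x ξ⟫ ≤ Lam * ‖ξ‖ ^ 2)
    (hv : ContDiffOn ℝ 2 v U) (hnonneg : ∀ x ∈ U, 0 ≤ v x)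
    (hsup : ∀ x ∈ U, LinearMap.trace ℝ E (A x ∘L hessian v x) ≤ 0) (hc : c ∈ U)
    (hvc : v c ≤ 1) (hb : 0 < b) (hδ : 0 ≤ δ) (hbδ : b * (finrank ℝ E * Lam / lam) ≤ δ ^ 2)
    (hs : 0 ≤ s) (hball : ∀ y ∈ ball x₀ r, closedBall y s ⊆ U ∧ dist c y ^ 2 / 2 + b < s ^ 2 / 2) :
    μ (ball x₀ r) ≤ ENNReal.ofReal ((Lam / lam) ^ finrank ℝ E) *
      μ {x ∈ U ∩ ball x₀ (r + δ) | v x < Real.exp (s ^ 2 / 2 / b)} := by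
  have hpos (x : E) (hx : x ∈ U) : 0 < v x + 1 := by linarith [hnonneg x hx]
  have hC2 : ContDiffOn ℝ 2 (fun z => v z + 1) U := hv.add contDiffOn_const
  have hlog : ContDiffOn ℝ 2 (fun z => b * Real.log (v z + 1)) U :=
    contDiffOn_const.mul (hC2.log fun x hx => (hpos x hx).ne')
  have hlog_nonneg (x : E) (hx : x ∈ U) : 0 ≤ b * Real.log (v x + 1) :=
    mul_nonneg hb.le (Real.log_nonneg (by linarith [hnonneg x hx]))
  have hlog_c : b * Real.log (v c + 1) ≤ b :=
    mul_le_of_le_one_right hb.le (by linarith [Real.log_le_sub_one_of_pos (hpos c hc)])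
  have hball_log (y : E) (hy : y ∈ ball x₀ r) :
      closedBall y s ⊆ U ∧ dist c y ^ 2 / 2 + b * Real.log (v c + 1) < s ^ 2 / 2 :=
    ⟨(hball y hy).1, by linarith [(hball y hy).2]⟩
  refine (addHaar_ball_le_of_contact μ hU hlog hlog_nonneg hs hc hball_log (δ := δ)
    (K := (Lam / lam) ^ finrank ℝ E) fun x hx hpos_hess => ?_).trans ?_
  · have hsup_log := trace_comp_hessian_log_le (hC2.contDiffAt (hU.mem_nhds hx)) (hpos x hx) hb
      (fun ξ => (hA x hx ξ).1) (by simpa only [hessian_add_const] using hsup x hx)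
    obtain ⟨hdet, hgrad⟩ :=
      abs_det_le_and_sq_norm_gradient_le hlam hLam hb (hA x hx) hsup_log hpos_hess
    exact ⟨hdet, (abs_le_of_sq_le_sq' (hgrad.trans hbδ) hδ).2⟩
  · gcongr _ * μ ?_
    rintro x ⟨hx, hval⟩
    have hexp := (Real.log_lt_iff_lt_exp (hpos x hx.1)).1 ((lt_div_iff₀' hb).2 hval)
    exact ⟨hx, by linarith⟩

theorem contact_measure_estimate_general [MeasurableSpace E] [BorelSpace E] (μ : Measure E)
    [μ.IsAddHaarMeasure] {ρ r : ℝ} (hρ : ρ < 1 / 2) (hr : 0 < r) (hlam : 0 < lam)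
    (hLam : lam ≤ Lam) :
    ∃ M θ : ℝ, 1 < M ∧ θ ∈ Ioo (0 : ℝ) 1 ∧
      ∀ (A : E → E →L[ℝ] E) (v : E → ℝ),
        (∀ x ∈ ball (0 : E) 1, ∀ ξ,
          lam * ‖ξ‖ ^ 2 ≤ ⟪ξ, A x ξ⟫ ∧ ⟪ξ, A x ξ⟫ ≤ Lam * ‖ξ‖ ^ 2) →
        ContDiffOn ℝ 2 v (ball (0 : E) 1) →
        (∀ x ∈ ball (0 : E) 1, 0 ≤ v x) →
        (∀ x ∈ ball (0 : E) 1, LinearMap.trace ℝ E (A x ∘L hessian v x) ≤ 0) →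
        v 0 ≤ 1 →
        ∀ x₀ ∈ ball (0 : E) ρ,
          ENNReal.ofReal θ * μ (ball x₀ r) ≤ μ {x ∈ ball x₀ r | v x < M} := by
  obtain ⟨b, hb, hbρ, hbr⟩ := exists_pos_lt_and_mul_lt (finrank ℝ E * Lam / lam)
    (show 0 < (1 / 4 - ρ / 2) / 4 by linarith) (show 0 < (r / 2) ^ 2 by positivity)
  set r' := min (r / 2) (1 / 4 - ρ / 2)
  have hr' : 0 < r' := lt_min (by linarith) (by linarith)
  have hr'r : r' ≤ r / 2 := min_le_left _ _
  -- The factor `2` keeps `θ < 1` in dimension zero as well.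
  set K := 2 * (Lam / lam) ^ finrank ℝ E
  have hell : 1 ≤ (Lam / lam) ^ finrank ℝ E := one_le_pow₀ ((one_le_div hlam).2 hLam)
  have hK : 1 < K := by linarith
  have hpow : 1 ≤ (r / r') ^ finrank ℝ E := one_le_pow₀ ((one_le_div hr').2 (by linarith))
  refine ⟨Real.exp ((1 / 2) ^ 2 / 2 / b), ((r / r') ^ finrank ℝ E * K)⁻¹,
    Real.one_lt_exp_iff.2 (by positivity),
    ⟨by positivity, inv_lt_one_of_one_lt₀ (one_lt_mul_of_le_of_lt hpow hK)⟩, ?_⟩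
  intro A v hA hv hnonneg hsup hv0 x₀ hx₀
  refine ofReal_inv_mul_addHaar_ball_le μ hr hr' (by positivity) ?_
  calc μ (ball x₀ r')
      ≤ ENNReal.ofReal ((Lam / lam) ^ finrank ℝ E) *
          μ {x ∈ ball 0 1 ∩ ball x₀ (r' + r / 2) | v x < Real.exp ((1 / 2) ^ 2 / 2 / b)} :=
        addHaar_ball_le_of_supersolution μ isOpen_ball hlam hLam hA hv hnonneg hsup
          (mem_ball_self one_pos) hv0 hb (by positivity) hbr.le (by norm_num) fun y hy =>
          closedBall_half_subset_and_sq_dist_lt hρ hx₀ (ball_subset_ball (min_le_right _ _) hy) hbρ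
    _ ≤ ENNReal.ofReal K * μ {x ∈ ball x₀ r | v x < Real.exp ((1 / 2) ^ 2 / 2 / b)} := by
        gcongr ENNReal.ofReal ?_ * μ ?_
        · linarith
        · exact fun x hx => ⟨ball_subset_ball (by linarith) hx.1.2, hx.2⟩

end Supersolution

section Coordinates

open scoped RealInnerProductSpace

variable {n : ℕ} {a : Fin n → Fin n → En n → ℝ}

/-- The operator `A(x)` with matrix `(aᵢⱼ(x))`, through which coordinate statements about the
coefficients are read in the inner product space `En n`. -/
def coeffOperator (a : Fin n → Fin n → En n → ℝ) (x : En n) : En n →L[ℝ] En n :=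
  Matrix.toEuclideanCLM (𝕜 := ℝ) (Matrix.of fun i j => a i j x)

lemma coeffOperator_apply (x ξ : En n) (i : Fin n) :
    coeffOperator a x ξ i = ∑ j, a i j x * ξ j := by
  simp [coeffOperator, Matrix.ofLp_toEuclideanCLM, Matrix.mulVec, dotProduct]

lemma UnifEllipticOn.inner_coeffOperator_bounds {Ω : Set (En n)} {lam Lam : ℝ}
    (ha : UnifEllipticOn Ω lam Lam a) {x : En n} (hx : x ∈ Ω) (ξ : En n) :
    lam * ‖ξ‖ ^ 2 ≤ ⟪ξ, coeffOperator a x ξ⟫ ∧ ⟪ξ, coeffOperator a x ξ⟫ ≤ Lam * ‖ξ‖ ^ 2 := by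
  have hquad : ⟪ξ, coeffOperator a x ξ⟫ = ∑ i, ∑ j, a i j x * ξ i * ξ j := by
    simp only [PiLp.inner_apply, coeffOperator_apply, Real.inner_apply, Finset.mul_sum]
    exact Finset.sum_congr rfl fun i _ => Finset.sum_congr rfl fun j _ => by ring
  rw [hquad, EuclideanSpace.real_norm_sq_eq]
  exact ha.2 x hx ξ

lemma trace_coeffOperator_comp_hessian (a : Fin n → Fin n → En n → ℝ) {v : En n → ℝ} {x : En n}
    (hv : ContDiffAt ℝ 2 v x) :
    LinearMap.trace ℝ (En n) (coeffOperator a x ∘L hessian v x) =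
      ∑ i, ∑ j, a i j x * pd2 v i j x := by
  have hpd2 (i j : Fin n) : hessian v x (EuclideanSpace.single i 1) j = pd2 v i j x := by
    have hsymm := isSymmetric_hessian hv (EuclideanSpace.single i 1) (EuclideanSpace.single j 1)
    rw [pd2, ← inner_hessian hv, real_inner_comm]
    simpa [EuclideanSpace.inner_single_left, EuclideanSpace.inner_single_right] using hsymm
  rw [LinearMap.trace_eq_sum_inner _ (EuclideanSpace.basisFun (Fin n) ℝ)]
  simp [EuclideanSpace.inner_single_left, coeffOperator_apply, hpd2]

end Coordinates

/-- **Contact/measure estimate.** There are `M > 1` and `θ ∈ (0,1)` depending only on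
`n, λ, Λ` such that any nonnegative `C²` supersolution of `Σ a_{ij} ∂_{ij} v ≤ 0` in `B₁`
with `v(0) ≤ 1` satisfies `|{x ∈ B_{1/8}(x₀) : v(x) < M}| ≥ θ |B_{1/8}(x₀)|` for every
`x₀ ∈ B_{1/4}`. -/
theorem contact_measure_estimate
    (n : ℕ) (hn : 2 ≤ n) (lam Lam : ℝ) (hlam : 0 < lam) (hLam : lam ≤ Lam) :
    ∃ M θ : ℝ, 1 < M ∧ θ ∈ Set.Ioo (0 : ℝ) 1 ∧
      ∀ (a : Fin n → Fin n → En n → ℝ) (v : En n → ℝ),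
        UnifEllipticOn (ball (0 : En n) 1) lam Lam a →
        ContDiffOn ℝ 2 v (ball (0 : En n) 1) →
        (∀ x ∈ ball (0 : En n) 1, 0 ≤ v x) →
        (∀ x ∈ ball (0 : En n) 1, ∑ i, ∑ j, a i j x * pd2 v i j x ≤ 0) →
        v 0 ≤ 1 →
        ∀ x₀ ∈ ball (0 : En n) (1 / 4),
          ENNReal.ofReal θ * volume (ball x₀ (1 / 8)) ≤
            volume {x ∈ ball x₀ (1 / 8) | v x < M} := by
  obtain ⟨M, θ, hM, hθ, h⟩ := contact_measure_estimate_general (E := En n) volume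
    (show (1 / 4 : ℝ) < 1 / 2 by norm_num) (show (0 : ℝ) < 1 / 8 by norm_num) hlam hLam
  refine ⟨M, θ, hM, hθ, fun a v ha hv hnonneg hsup => h (coeffOperator a) v
    (fun x hx => ha.inner_coeffOperator_bounds hx) hv hnonneg fun x hx => ?_⟩
  rw [trace_coeffOperator_comp_hessian a (hv.contDiffAt (isOpen_ball.mem_nhds hx))]
  exact hsup x hx
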